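/- arXiv:math/0204108 — 4 statements merged into one kernel-verified Lean document; each statement's English description precedes it below -/
import Mathlib

section
/- Let λ and μ be real numbers with λ > 0. Then for every complex number z, the series ∑_{j=0}^{∞} z^j / Γ(λ·j + μ) is summable, where Γ denotes the complex Gamma function evaluated at the real argument λ·j + μ (with the convention that terms where Γ vanishes or has a pole are interpreted via the entire reciprocal 1/Γ, i.e. such terms are 0). -/
/-!
By log-convexity, the slope of `log Γ` to the right of `x + 1` is at least its slope
`log Γ(x + 1) - log Γ(x) = log x` over `[x, x + 1]`. Hence `Γ(x + 1 + s) / Γ(x + 1) ≥ x ^ s`, which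
tends to infinity for `s > 0`, and with `s = λ` the ratio test applies to the Mittag-Leffler series.
-/

open Asymptotics Filter

theorem rpow_mul_Gamma_add_one_le {x s : ℝ} (hx : 0 < x) (hs : 0 ≤ s) :
    x ^ s * Real.Gamma (x + 1) ≤ Real.Gamma (x + 1 + s) := by
  rcases hs.eq_or_lt with rfl | hs
  · simp
  have hΓ : 0 < Real.Gamma x := Real.Gamma_pos_of_pos hx
  have hΓ_one : 0 < Real.Gamma (x + 1) := Real.Gamma_pos_of_pos (by positivity)
  have hΓ_add : 0 < Real.Gamma (x + 1 + s) := Real.Gamma_pos_of_pos (by positivity)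
  have slope_left : Real.log (Real.Gamma (x + 1)) - Real.log (Real.Gamma x) = Real.log x := by
    rw [Real.Gamma_add_one hx.ne', Real.log_mul hx.ne' hΓ.ne', add_sub_cancel_right]
  have slope_right : Real.log x ≤
      (Real.log (Real.Gamma (x + 1 + s)) - Real.log (Real.Gamma (x + 1))) / s := by
    simpa [slope_left] using Real.convexOn_log_Gamma.slope_mono_adjacent
      (Set.mem_Ioi.2 hx) (Set.mem_Ioi.2 (by positivity : 0 < x + 1 + s))
      (lt_add_one x) (lt_add_of_pos_right (x + 1) hs)
  rw [le_div_iff₀ hs] at slope_right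
  rw [← Real.log_le_log_iff (by positivity) hΓ_add,
    Real.log_mul (by positivity) hΓ_one.ne', Real.log_rpow hx]
  linarith

theorem isLittleO_Gamma_Gamma_add {s : ℝ} (hs : 0 < s) :
    Real.Gamma =o[atTop] fun x ↦ Real.Gamma (x + s) := by
  refine isLittleO_iff_nat_mul_le.2 fun n ↦ ?_
  have sub_one_atTop : Tendsto (fun x : ℝ ↦ x - 1) atTop atTop :=
    tendsto_atTop_add_const_right _ (-1) tendsto_id
  have rpow_large : ∀ᶠ x : ℝ in atTop, (n : ℝ) ≤ (x - 1) ^ s :=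
    ((tendsto_rpow_atTop hs).comp sub_one_atTop).eventually_ge_atTop (n : ℝ)
  filter_upwards [rpow_large, eventually_gt_atTop 1] with x hn hx
  have hΓ : 0 ≤ Real.Gamma x := Real.Gamma_nonneg_of_nonneg (by linarith)
  rw [Real.norm_of_nonneg hΓ]
  calc (n : ℝ) * Real.Gamma x ≤ (x - 1) ^ s * Real.Gamma x := by gcongr
    _ ≤ Real.Gamma (x + s) := by
      simpa only [sub_add_cancel] using rpow_mul_Gamma_add_one_le (sub_pos.2 hx) hs.le
    _ ≤ ‖Real.Gamma (x + s)‖ := Real.le_norm_self _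

theorem isLittleO_inv_Gamma_add_inv_Gamma {s : ℝ} (hs : 0 < s) :
    (fun x ↦ (Real.Gamma (x + s))⁻¹) =o[atTop] fun x ↦ (Real.Gamma x)⁻¹ := by
  refine (isLittleO_Gamma_Gamma_add hs).inv_rev ?_
  filter_upwards [eventually_gt_atTop 0] with x hx h_zero
  exact absurd h_zero (Real.Gamma_pos_of_pos hx).ne'

theorem summable_mul_pow_of_isLittleO_succ {R : Type*} [NormedRing R] [NormMulClass R]
    [CompleteSpace R] {a : ℕ → R} (ha : (fun n ↦ a (n + 1)) =o[atTop] a) (z : R) :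
    Summable fun n ↦ a n * z ^ n := by
  have pow_succ_isBigO : (fun n ↦ z ^ (n + 1)) =O[atTop] fun n ↦ z ^ n :=
    .of_bound ‖z‖ (.of_forall fun n ↦ by rw [pow_succ', norm_mul])
  have ratio : (fun n ↦ a (n + 1) * z ^ (n + 1)) =o[atTop] fun n ↦ a n * z ^ n :=
    ha.mul_isBigO pow_succ_isBigO
  exact summable_of_ratio_norm_eventually_le one_half_lt_one (ratio.bound one_half_pos)

/-- The power series defining the two-parameter Mittag-Leffler function
`E_{λ,μ}(z) = ∑_{j=0}^∞ z^j / Γ(λ j + μ)` is summable for every `z : ℂ`,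
provided `λ > 0`. -/
theorem mittagLeffler_summable (l μ : ℝ) (hl : 0 < l) (z : ℂ) :
    Summable (fun j : ℕ => z ^ j / Complex.Gamma ((l * (j : ℝ) + μ : ℝ) : ℂ)) := by
  have args_atTop : Tendsto (fun j : ℕ ↦ l * (j : ℝ) + μ) atTop atTop :=
    tendsto_atTop_add_const_right _ μ (tendsto_natCast_atTop_atTop.const_mul_atTop hl)
  have coeff_ratio : (fun j : ℕ ↦ (Complex.Gamma (l * (j + 1 : ℕ) + μ : ℝ))⁻¹) =o[atTop]
      fun j : ℕ ↦ (Complex.Gamma (l * j + μ : ℝ))⁻¹ := by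
    simp only [Complex.Gamma_ofReal, ← Complex.ofReal_inv, Complex.isLittleO_ofReal_left,
      Complex.isLittleO_ofReal_right]
    simpa only [Function.comp_def, Nat.cast_add_one, mul_add_one, add_right_comm] using
      (isLittleO_inv_Gamma_add_inv_Gamma hl).comp_tendsto args_atTop
  simpa only [div_eq_inv_mul] using summable_mul_pow_of_isLittleO_succ coeff_ratio z
end

section
/- Let λ and μ be real numbers with λ > 0. Then the function E_{λ,μ} : ℂ → ℂ defined by E_{λ,μ}(z) = ∑_{j=0}^{∞} z^j / Γ(λ·j + μ) is analytic on all of ℂ (entire). -/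
/-!
Keeping only the part `t > a` of Euler's integral gives `a ^ (s - 1) * exp (-a) ≤ Γ(s)` for `1 ≤ s`.
As `a` is arbitrary, `1 / Γ(λ j + μ)` is `O(r ^ j)` for every `r > 0`, so the power series has
infinite radius of convergence.
-/

open Asymptotics Filter MeasureTheory Set

section PowerSeries

variable {𝕜 E : Type*} [NontriviallyNormedField 𝕜] [NormedRing E] [NormedAlgebra 𝕜 E] {c : ℕ → 𝕜}

theorem ofScalars_radius_eq_top_of_isBigO_pow
    (hc : ∀ r : ℝ, 0 < r → c =O[atTop] fun n : ℕ ↦ r ^ n) :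
    (FormalMultilinearSeries.ofScalars E c).radius = ⊤ := by
  refine FormalMultilinearSeries.radius_eq_top_of_forall_nnreal_isBigO _ fun r ↦ ?_
  have norm_le : (fun n ↦ ‖FormalMultilinearSeries.ofScalars E c n‖) =O[atTop] c := by
    refine .of_bound' ?_
    filter_upwards [eventually_gt_atTop 0] with n hn
    rw [Real.norm_of_nonneg (ContinuousMultilinearMap.opNorm_nonneg _)]
    exact FormalMultilinearSeries.ofScalars_norm_le E c n hn
  have coeff_isBigO := norm_le.trans (hc ((r : ℝ) + 1)⁻¹ (by positivity))
  refine (coeff_isBigO.mul (isBigO_refl (fun n : ℕ ↦ (r : ℝ) ^ n) atTop)).trans ?_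
  refine .of_bound' (.of_forall fun n ↦ ?_)
  rw [← mul_pow, norm_pow, norm_one, Real.norm_of_nonneg (by positivity)]
  exact pow_le_one₀ (by positivity) ((inv_mul_le_one₀ (by positivity)).2 (by simp))

theorem analyticOnNhd_tsum_smul_pow_of_isBigO_pow [CompleteSpace E]
    (hc : ∀ r : ℝ, 0 < r → c =O[atTop] fun n : ℕ ↦ r ^ n) :
    AnalyticOnNhd 𝕜 (fun x : E ↦ ∑' n, c n • x ^ n) univ := by
  rw [← FormalMultilinearSeries.ofScalarsSum_eq_tsum, ← Metric.eball_top (0 : E),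
    ← ofScalars_radius_eq_top_of_isBigO_pow (E := E) hc]
  exact (FormalMultilinearSeries.ofScalars E c).analyticOnNhd

end PowerSeries

section GammaGrowth

theorem rpow_sub_one_mul_exp_neg_le_Gamma {a s : ℝ} (ha : 0 ≤ a) (hs : 1 ≤ s) :
    a ^ (s - 1) * Real.exp (-a) ≤ Real.Gamma s := by
  have hs₀ : 0 < s := by linarith
  have integrable := Real.GammaIntegral_convergent hs₀
  have Ioi_subset : Ioi a ⊆ Ioi 0 := Ioi_subset_Ioi ha
  calc a ^ (s - 1) * Real.exp (-a)
      = ∫ t in Ioi a, Real.exp (-t) * a ^ (s - 1) := by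
        rw [integral_mul_const, integral_exp_neg_Ioi, mul_comm]
    _ ≤ ∫ t in Ioi a, Real.exp (-t) * t ^ (s - 1) := by
        refine setIntegral_mono_on ((integrableOn_exp_neg_Ioi a).mul_const _)
          (integrable.mono_set Ioi_subset) measurableSet_Ioi fun t ht ↦ ?_
        have hat : a ≤ t := le_of_lt ht
        gcongr
    _ ≤ ∫ t in Ioi 0, Real.exp (-t) * t ^ (s - 1) := by
        refine setIntegral_mono_set integrable ?_ Ioi_subset.eventuallyLE
        filter_upwards [ae_restrict_mem measurableSet_Ioi] with t ht
        exact mul_nonneg (Real.exp_nonneg _) (Real.rpow_nonneg (le_of_lt ht) _)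
    _ = Real.Gamma s := (Real.Gamma_eq_integral hs₀).symm

theorem inv_Gamma_isBigO_rpow {b : ℝ} (hb : 0 < b) :
    (fun s ↦ (Real.Gamma s)⁻¹) =O[atTop] fun s ↦ b ^ s := by
  refine .of_bound (b⁻¹ * Real.exp b⁻¹) ?_
  filter_upwards [eventually_ge_atTop 1] with s hs
  have Gamma_inv_nonneg := inv_nonneg.2 (Real.Gamma_nonneg_of_nonneg (zero_le_one.trans hs))
  rw [Real.norm_of_nonneg Gamma_inv_nonneg, Real.norm_of_nonneg (by positivity)]
  calc (Real.Gamma s)⁻¹ ≤ (b⁻¹ ^ (s - 1) * Real.exp (-b⁻¹))⁻¹ := by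
        gcongr
        exact rpow_sub_one_mul_exp_neg_le_Gamma (by positivity) hs
    _ = b⁻¹ * Real.exp b⁻¹ * b ^ s := by
        rw [mul_inv, Real.inv_rpow hb.le, inv_inv, Real.exp_neg, inv_inv, Real.rpow_sub_one hb.ne']
        ring

theorem inv_Gamma_mul_add_isBigO_pow {l r : ℝ} (μ : ℝ) (hl : 0 < l) (hr : 0 < r) :
    (fun j : ℕ ↦ (Real.Gamma (l * j + μ))⁻¹) =O[atTop] fun j : ℕ ↦ r ^ j := by
  have arg_tendsto : Tendsto (fun j : ℕ ↦ l * j + μ) atTop atTop :=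
    tendsto_atTop_add_const_right _ _ (tendsto_natCast_atTop_atTop.const_mul_atTop hl)
  have rpow_eq (j : ℕ) : (r ^ l⁻¹) ^ (l * j + μ) = (r ^ l⁻¹) ^ μ * r ^ j := by
    rw [Real.rpow_add (by positivity), Real.rpow_mul (by positivity),
      Real.rpow_inv_rpow hr.le hl.ne', Real.rpow_natCast, mul_comm]
  have inv_Gamma_isBigO :=
    (inv_Gamma_isBigO_rpow (Real.rpow_pos_of_pos hr l⁻¹)).comp_tendsto arg_tendsto
  simp only [Function.comp_def, rpow_eq] at inv_Gamma_isBigO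
  exact inv_Gamma_isBigO.trans (isBigO_const_mul_self _ _ _)

end GammaGrowth

theorem mittagLeffler_entire_general {𝕜 E : Type*} [RCLike 𝕜] [NormedRing E] [NormedAlgebra 𝕜 E]
    [CompleteSpace E] {l : ℝ} (μ : ℝ) (hl : 0 < l) :
    AnalyticOnNhd 𝕜
      (fun w : E ↦ ∑' j : ℕ, (Real.Gamma (l * j + μ) : 𝕜)⁻¹ • w ^ j) univ := by
  refine analyticOnNhd_tsum_smul_pow_of_isBigO_pow fun r hr ↦ IsBigO.of_norm_left ?_
  simpa only [norm_inv, RCLike.norm_ofReal, Real.norm_eq_abs] using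
    (inv_Gamma_mul_add_isBigO_pow μ hl hr).norm_left

/-- The two-parameter Mittag-Leffler function
`E_{λ,μ}(z) = ∑_{j=0}^∞ z^j / Γ(λ j + μ)` (with `λ > 0`) is entire:
it is analytic at every point of `ℂ`. -/
theorem mittagLeffler_entire (l μ : ℝ) (hl : 0 < l) :
    ∀ z : ℂ, AnalyticAt ℂ
      (fun w : ℂ => ∑' j : ℕ, w ^ j / Complex.Gamma ((l * (j : ℝ) + μ : ℝ) : ℂ)) z := by
  intro z
  simp only [div_eq_inv_mul, Complex.Gamma_ofReal]
  exact mittagLeffler_entire_general μ hl z (mem_univ z)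
end

section
/- Let λ and μ be real numbers with λ > 0, and let k be a natural number. Then for every complex number z, the k-th iterated derivative of the two-parameter Mittag-Leffler function satisfies E_{λ,μ}^{(k)}(z) = ∑_{j=0}^{∞} ((j+k)! / j!) · z^j / Γ(λ·j + λ·k + μ). -/
open Nat

/-!
For `x ≥ 1` the integrand of `Γ(x) = ∫ e^{-t} t^{x-1} dt` is at least `e^{-t} b^{x-1}` on the
half-line `t ≥ b`, so `e^{-b} b^{x-1} ≤ Γ(x)`. Taking `b^λ` arbitrarily large, `Γ(λ j + μ)` outgrows
every geometric sequence in `j`; hence the Mittag-Leffler series has infinite radius of convergence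
and may be differentiated termwise.
-/

open Asymptotics Filter MeasureTheory Set
open scoped ENNReal

section PowerSeries

variable {𝕜 F : Type*} [NontriviallyNormedField 𝕜] [NormedAddCommGroup F] [NormedSpace 𝕜 F]
  [CompleteSpace F] {p : FormalMultilinearSeries 𝕜 𝕜 F} {f : 𝕜 → F} {x y : 𝕜} {r : ℝ≥0∞}

theorem hasFPowerSeriesOnBall_deriv (hf : HasFPowerSeriesOnBall f p x r) :
    HasFPowerSeriesOnBall (deriv f)
      ((ContinuousLinearMap.apply 𝕜 F (1 : 𝕜)).compFormalMultilinearSeries p.derivSeries) x r :=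
  (ContinuousLinearMap.apply 𝕜 F (1 : 𝕜)).comp_hasFPowerSeriesOnBall hf.fderiv

theorem hasSum_iteratedDeriv_of_hasFPowerSeriesOnBall (hf : HasFPowerSeriesOnBall f p x r) (k : ℕ)
    (hy : y ∈ Metric.eball 0 r) :
    HasSum (fun j ↦ (j + k).descFactorial k • y ^ j • p.coeff (j + k))
      (iteratedDeriv k f (x + y)) := by
  induction k generalizing f p with
  | zero => simpa using hf.hasSum hy
  | succ k ih =>
    rw [iteratedDeriv_succ']
    convert ih (hasFPowerSeriesOnBall_deriv hf) using 2 with j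
    have hcoeff : ((ContinuousLinearMap.apply 𝕜 F (1 : 𝕜)).compFormalMultilinearSeries
        p.derivSeries).coeff (j + k) = (j + k + 1) • p.coeff (j + k + 1) :=
      p.derivSeries_coeff_one (j + k)
    rw [hcoeff, ← add_assoc, succ_descFactorial_succ, mul_comm, mul_smul, smul_comm (y ^ j)]

end PowerSeries

theorem exp_neg_mul_rpow_le_Gamma {b x : ℝ} (hb : 0 ≤ b) (hx : 1 ≤ x) :
    Real.exp (-b) * b ^ (x - 1) ≤ Real.Gamma x := by
  have hGamma := Real.GammaIntegral_convergent (zero_lt_one.trans_le hx)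
  have hIoi : Ioi b ⊆ Ioi 0 := Ioi_subset_Ioi hb
  calc Real.exp (-b) * b ^ (x - 1)
      = ∫ t in Ioi b, Real.exp (-t) * b ^ (x - 1) := by
        rw [integral_mul_const, integral_exp_neg_Ioi]
    _ ≤ ∫ t in Ioi b, Real.exp (-t) * t ^ (x - 1) := by
        refine setIntegral_mono_on ((integrableOn_exp_neg_Ioi b).mul_const _)
          (hGamma.mono_set hIoi) measurableSet_Ioi fun t ht ↦ ?_
        have hbt : b ≤ t := (mem_Ioi.1 ht).le
        gcongr
    _ ≤ ∫ t in Ioi 0, Real.exp (-t) * t ^ (x - 1) := by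
        refine setIntegral_mono_set hGamma ?_ hIoi.eventuallyLE
        filter_upwards [ae_restrict_mem measurableSet_Ioi] with t ht
        have ht0 : 0 < t := ht
        positivity
    _ = Real.Gamma x := (Real.Gamma_eq_integral (zero_lt_one.trans_le hx)).symm

theorem isBigO_pow_Gamma_mul_add {l : ℝ} (hl : 0 < l) (μ ρ : ℝ) :
    (fun j : ℕ ↦ ρ ^ j) =O[atTop] fun j : ℕ ↦ Real.Gamma (l * j + μ) := by
  set b : ℝ := (|ρ| + 1) ^ l⁻¹
  have hb : 0 < b := by positivity
  have hbl : b ^ l = |ρ| + 1 := Real.rpow_inv_rpow (by positivity) hl.ne'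
  have hC : 0 < Real.exp (-b) * b ^ (μ - 1) := by positivity
  have htendsto : Tendsto (fun j : ℕ ↦ l * j + μ) atTop atTop :=
    tendsto_atTop_add_const_right _ _ (tendsto_natCast_atTop_atTop.const_mul_atTop hl)
  refine IsBigO.of_bound (Real.exp (-b) * b ^ (μ - 1))⁻¹ ?_
  filter_upwards [htendsto.eventually_ge_atTop 1] with j hj
  rw [le_inv_mul_iff₀ hC, norm_pow, Real.norm_eq_abs]
  calc Real.exp (-b) * b ^ (μ - 1) * |ρ| ^ j
      ≤ Real.exp (-b) * b ^ (μ - 1) * (|ρ| + 1) ^ j := by gcongr; linarith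
    _ = Real.exp (-b) * b ^ (l * j + μ - 1) := by
        rw [add_sub_assoc, Real.rpow_add hb, Real.rpow_mul_natCast hb.le, hbl]
        ring
    _ ≤ Real.Gamma (l * j + μ) := exp_neg_mul_rpow_le_Gamma hb.le hj
    _ ≤ ‖Real.Gamma (l * j + μ)‖ := Real.le_norm_self _

/-- The power series `∑ z ^ j / Γ(l j + μ)` at the origin of the two-parameter Mittag-Leffler
function `E_{l,μ}`. At a pole of `Γ` the coefficient is `0⁻¹ = 0`, the value there of the entire
function `1 / Γ`. -/
noncomputable def mittagLefflerSeries (l μ : ℝ) : FormalMultilinearSeries ℂ ℂ ℂ :=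
  .ofScalars ℂ fun j ↦ (Complex.Gamma ((l * (j : ℝ) + μ : ℝ) : ℂ))⁻¹

theorem coeff_mittagLefflerSeries (l μ : ℝ) (j : ℕ) :
    (mittagLefflerSeries l μ).coeff j = (Complex.Gamma ((l * (j : ℝ) + μ : ℝ) : ℂ))⁻¹ :=
  FormalMultilinearSeries.coeff_ofScalars

theorem radius_mittagLefflerSeries {l : ℝ} (hl : 0 < l) (μ : ℝ) :
    (mittagLefflerSeries l μ).radius = ⊤ := by
  refine ENNReal.eq_top_of_forall_nnreal_le fun ρ ↦ FormalMultilinearSeries.le_radius_of_isBigO _ ?_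
  simp only [FormalMultilinearSeries.norm_apply_eq_norm_coef, coeff_mittagLefflerSeries,
    Complex.Gamma_ofReal, norm_inv, Complex.norm_real]
  refine ((isBigO_refl _ _).mul (isBigO_pow_Gamma_mul_add hl μ ρ)).trans (.of_bound 1 ?_)
  filter_upwards with j
  simpa using inv_mul_le_one

theorem hasFPowerSeriesOnBall_mittagLeffler {l : ℝ} (hl : 0 < l) (μ : ℝ) :
    HasFPowerSeriesOnBall
      (fun w : ℂ ↦ ∑' j : ℕ, w ^ j / Complex.Gamma ((l * (j : ℝ) + μ : ℝ) : ℂ))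
      (mittagLefflerSeries l μ) 0 ⊤ := by
  have hsum := (mittagLefflerSeries l μ).hasFPowerSeriesOnBall
    (by rw [radius_mittagLefflerSeries hl μ]; exact ENNReal.zero_lt_top)
  rw [radius_mittagLefflerSeries hl μ] at hsum
  refine hsum.congr fun w _ ↦ tsum_congr fun j ↦ ?_
  rw [FormalMultilinearSeries.apply_eq_pow_smul_coeff, coeff_mittagLefflerSeries, smul_eq_mul,
    div_eq_mul_inv]

/-- The `k`-th derivative of the two-parameter Mittag-Leffler function:
`E_{λ,μ}^{(k)}(z) = ∑_{j=0}^∞ ((j+k)!/j!) · z^j / Γ(λ j + λ k + μ)` for `λ > 0`. -/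
theorem mittagLeffler_iteratedDeriv (l μ : ℝ) (hl : 0 < l) (k : ℕ) (z : ℂ) :
    iteratedDeriv k
      (fun w : ℂ => ∑' j : ℕ, w ^ j / Complex.Gamma ((l * (j : ℝ) + μ : ℝ) : ℂ)) z =
    ∑' j : ℕ, (((j + k)! : ℂ) / (j ! : ℂ)) * z ^ j /
      Complex.Gamma ((l * (j : ℝ) + l * (k : ℝ) + μ : ℝ) : ℂ) := by
  have htaylor := hasSum_iteratedDeriv_of_hasFPowerSeriesOnBall
    (hasFPowerSeriesOnBall_mittagLeffler hl μ) k (y := z) (by simp)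
  rw [zero_add] at htaylor
  rw [← htaylor.tsum_eq]
  refine tsum_congr fun j ↦ ?_
  have hfactorial : ((j + k).descFactorial k : ℂ) = ((j + k)! : ℂ) / (j ! : ℂ) := by
    have hmul : j ! * (j + k).descFactorial k = (j + k)! := by
      simpa only [add_tsub_cancel_right] using factorial_mul_descFactorial (le_add_left k j)
    rw [eq_div_iff (mod_cast j.factorial_ne_zero), mul_comm]
    exact_mod_cast hmul
  have hindex : l * ((j + k : ℕ) : ℝ) + μ = l * j + l * k + μ := by push_cast; ring
  rw [coeff_mittagLefflerSeries, hindex, nsmul_eq_mul, smul_eq_mul, hfactorial, ← mul_assoc,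
    ← div_eq_mul_inv]
end

section
/- Let a₂, a₁, a₀ > 0 be real numbers and let α > β > 0. For every t ≥ 0, set x = −(a₁/a₂)·t^{α−β}. Then for every natural number m the inner series S_m = ∑_{j=0}^{∞} ((j+m)!/j!) · x^j / Γ((α−β)·(j+m) + α + β·m + 1) is summable, and moreover the outer series ∑_{m=0}^{∞} ((−1)^m/m!) · (a₀/a₂)^m · t^{α(m+1)} · S_m defining the unit step response y(t) of the fractional-order system is summable. -/
open Nat

/-!
With `x = -(a₁/a₂) t^(α-β)` and `y = -(a₀/a₂) t^α`, the double series is, up to the factor `t^α`,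
the bivariate series `∑ (m+j choose m) y^m x^j / Γ(α m + (α-β) j + α + 1)`. The binomial
coefficient is at most `2^(m+j)` and `Γ(s)` outgrows every exponential `R^s`, so a large enough
`R` makes the product of two geometric series of ratio `1/2` a majorant. Absolute convergence of
this double series then gives convergence of every row and of the series of row sums.
-/

section GammaGrowth

open Set Filter Asymptotics MeasureTheory

lemma rpow_mul_exp_neg_le_Gamma {R s : ℝ} (hR : 0 ≤ R) (hs : 1 ≤ s) :
    R ^ (s - 1) * Real.exp (-R) ≤ Real.Gamma s := by
  have hint := Real.GammaIntegral_convergent (zero_lt_one.trans_le hs)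
  have hsub : Ioi R ⊆ Ioi 0 := Ioi_subset_Ioi hR
  calc R ^ (s - 1) * Real.exp (-R) = ∫ u in Ioi R, Real.exp (-u) * R ^ (s - 1) := by
        rw [integral_mul_const, integral_exp_neg_Ioi, mul_comm]
    _ ≤ ∫ u in Ioi R, Real.exp (-u) * u ^ (s - 1) := by
        refine setIntegral_mono_on ((integrableOn_exp_neg_Ioi R).mul_const _)
          (hint.mono_set hsub) measurableSet_Ioi fun u (hu : R < u) ↦ ?_
        gcongr
    _ ≤ ∫ u in Ioi 0, Real.exp (-u) * u ^ (s - 1) := by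
        refine setIntegral_mono_set hint ?_ hsub.eventuallyLE
        filter_upwards [ae_restrict_mem measurableSet_Ioi] with u (hu : 0 < u)
        exact mul_nonneg (Real.exp_nonneg _) (Real.rpow_nonneg hu.le _)
    _ = Real.Gamma s := (Real.Gamma_eq_integral (zero_lt_one.trans_le hs)).symm

lemma rpow_isBigO_Gamma {R : ℝ} (hR : 0 < R) :
    (fun s : ℝ ↦ R ^ s) =O[atTop] Real.Gamma := by
  refine IsBigO.of_bound (R * Real.exp R) ?_
  filter_upwards [eventually_ge_atTop 1] with s hs
  rw [Real.norm_of_nonneg (Real.rpow_nonneg hR.le s),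
    Real.norm_of_nonneg (Real.Gamma_pos_of_pos (zero_lt_one.trans_le hs)).le]
  calc R ^ s = R * Real.exp R * (R ^ (s - 1) * Real.exp (-R)) := by
        rw [Real.rpow_sub_one hR.ne', Real.exp_neg]
        field_simp
    _ ≤ R * Real.exp R * Real.Gamma s := by
        gcongr
        exact rpow_mul_exp_neg_le_Gamma hR.le hs

lemma inv_Gamma_isBigO_rpow_neg (𝕜 : Type*) [RCLike 𝕜] {R : ℝ} (hR : 0 < R) :
    (fun s : ℝ ↦ (Real.Gamma s : 𝕜)⁻¹) =O[atTop] fun s : ℝ ↦ R ^ (-s) := by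
  have hinv := (rpow_isBigO_Gamma hR).inv_rev
    (.of_forall fun s hs ↦ absurd hs (Real.rpow_pos_of_pos hR s).ne')
  refine (hinv.norm_left.congr (fun s ↦ ?_) fun s ↦ (Real.rpow_neg hR.le s).symm).of_norm_left
  rw [norm_inv, norm_inv, RCLike.norm_ofReal, Real.norm_eq_abs]

end GammaGrowth

section BivariateSeries

open Filter Asymptotics

variable {𝕜 : Type*} [RCLike 𝕜]

lemma tendsto_mul_natCast_add_mul_natCast_cofinite {a b : ℝ} (ha : 0 < a) (hb : 0 < b) :
    Tendsto (fun p : ℕ × ℕ ↦ a * p.1 + b * p.2) cofinite atTop := by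
  rw [← coprod_cofinite, Filter.coprod, tendsto_sup, Nat.cofinite_eq_atTop]
  have hcast {r : ℝ} (hr : 0 < r) : Tendsto (fun n : ℕ ↦ r * n) atTop atTop :=
    tendsto_natCast_atTop_atTop.const_mul_atTop hr
  exact ⟨tendsto_atTop_mono (fun p ↦ le_add_of_nonneg_right (by positivity))
      ((hcast ha).comp tendsto_comap),
    tendsto_atTop_mono (fun p ↦ le_add_of_nonneg_left (by positivity))
      ((hcast hb).comp tendsto_comap)⟩

lemma choose_mul_pow_mul_pow_le {u v U V : ℝ} (hu : 0 ≤ u) (hv : 0 ≤ v)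
    (hU : 4 * u ≤ U) (hV : 4 * v ≤ V) (m j : ℕ) :
    (m + j).choose m * u ^ m * v ^ j ≤ (1 / 2) ^ m * (1 / 2) ^ j * (U ^ m * V ^ j) := by
  have hchoose : ((m + j).choose m : ℝ) ≤ 2 ^ (m + j) := mod_cast Nat.choose_le_two_pow _ _
  have hU' : 2 * u ≤ U / 2 := by linarith
  have hV' : 2 * v ≤ V / 2 := by linarith
  calc (m + j).choose m * u ^ m * v ^ j ≤ 2 ^ (m + j) * u ^ m * v ^ j := by gcongr
    _ = (2 * u) ^ m * (2 * v) ^ j := by ring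
    _ ≤ (U / 2) ^ m * (V / 2) ^ j :=
        mul_le_mul (pow_le_pow_left₀ (by positivity) hU' m)
          (pow_le_pow_left₀ (by positivity) hV' j) (by positivity)
          (pow_nonneg (by linarith) m)
    _ = (1 / 2) ^ m * (1 / 2) ^ j * (U ^ m * V ^ j) := by ring

lemma exists_pos_le_rpow_and_le_rpow {a b : ℝ} (ha : 0 < a) (hb : 0 < b) (u v : ℝ) :
    ∃ R : ℝ, 0 < R ∧ u ≤ R ^ a ∧ v ≤ R ^ b :=
  ((eventually_gt_atTop 0).and
    (((tendsto_rpow_atTop ha).eventually_ge_atTop u).and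
      ((tendsto_rpow_atTop hb).eventually_ge_atTop v))).exists

theorem summable_choose_mul_pow_mul_pow_div_Gamma {a b : ℝ} (ha : 0 < a) (hb : 0 < b) (c : ℝ)
    (y x : 𝕜) :
    Summable fun p : ℕ × ℕ ↦
      ((p.1 + p.2).choose p.1 : 𝕜) * y ^ p.1 * x ^ p.2 /
        (Real.Gamma (a * p.1 + b * p.2 + c) : 𝕜) := by
  obtain ⟨R, hR, hy, hx⟩ := exists_pos_le_rpow_and_le_rpow ha hb (4 * ‖y‖) (4 * ‖x‖)
  have hgeom : Summable fun p : ℕ × ℕ ↦ (1 / 2 : ℝ) ^ p.1 * (1 / 2 : ℝ) ^ p.2 :=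
    summable_geometric_two.mul_of_nonneg summable_geometric_two
      (fun _ ↦ by positivity) fun _ ↦ by positivity
  refine summable_of_isBigO hgeom ?_
  have hnum : (fun p : ℕ × ℕ ↦ ((p.1 + p.2).choose p.1 : 𝕜) * y ^ p.1 * x ^ p.2)
      =O[cofinite] fun p ↦ (1 / 2 : ℝ) ^ p.1 * (1 / 2 : ℝ) ^ p.2 * R ^ (a * p.1 + b * p.2 + c) := by
    refine IsBigO.of_bound (R ^ (-c)) (.of_forall fun ⟨m, j⟩ ↦ ?_)
    have hpow : R ^ (-c) * R ^ (a * m + b * j + c) = (R ^ a) ^ m * (R ^ b) ^ j := by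
      rw [← Real.rpow_add hR, neg_add_cancel_comm_assoc, Real.rpow_add hR, Real.rpow_mul hR.le,
        Real.rpow_mul hR.le, Real.rpow_natCast, Real.rpow_natCast]
    rw [norm_mul, norm_mul, norm_pow, norm_pow, RCLike.norm_natCast,
      Real.norm_of_nonneg (by positivity), mul_left_comm, hpow]
    exact choose_mul_pow_mul_pow_le (norm_nonneg y) (norm_nonneg x) hy hx m j
  have hGamma : (fun p : ℕ × ℕ ↦ (Real.Gamma (a * p.1 + b * p.2 + c) : 𝕜)⁻¹)
      =O[cofinite] fun p ↦ R ^ (-(a * p.1 + b * p.2 + c)) :=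
    (inv_Gamma_isBigO_rpow_neg 𝕜 hR).comp_tendsto (tendsto_atTop_add_const_right _ c
      (tendsto_mul_natCast_add_mul_natCast_cofinite ha hb))
  refine (hnum.mul hGamma).congr (fun p ↦ (div_eq_mul_inv _ _).symm) fun p ↦ ?_
  rw [mul_assoc, ← Real.rpow_add hR, add_neg_cancel, Real.rpow_zero, mul_one]

lemma factorial_add_div_factorial {K : Type*} [DivisionRing K] [CharZero K] (j m : ℕ) :
    ((j + m)! : K) / (j ! : K) = (m + j).choose m * m ! := by
  rw [div_eq_iff (Nat.cast_ne_zero.2 j.factorial_ne_zero), add_comm j m,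
    ← Nat.add_choose_mul_factorial_mul_factorial, Nat.choose_symm_add,
    Nat.cast_mul, Nat.cast_mul]

theorem step_response_series_summable_general {α β t : ℝ} (hα : 0 < α) (hβα : β < α)
    (ht : 0 ≤ t) (b₁ b₀ : 𝕜) :
    (∀ m : ℕ, Summable (fun j : ℕ =>
        (((j + m)! : 𝕜) / (j ! : 𝕜)) * (-b₁ * (t ^ (α - β) : ℝ)) ^ j /
          (Real.Gamma ((α - β) * ((j : ℝ) + (m : ℝ)) + α + β * (m : ℝ) + 1) : 𝕜))) ∧
    Summable (fun m : ℕ =>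
      ((-1 : 𝕜) ^ m / (m ! : 𝕜)) * b₀ ^ m * (t ^ (α * ((m : ℝ) + 1)) : ℝ) *
        ∑' j : ℕ, (((j + m)! : 𝕜) / (j ! : 𝕜)) * (-b₁ * (t ^ (α - β) : ℝ)) ^ j /
          (Real.Gamma ((α - β) * ((j : ℝ) + (m : ℝ)) + α + β * (m : ℝ) + 1) : 𝕜)) := by
  have hGamma (m j : ℕ) : (α - β) * ((j : ℝ) + m) + α + β * m + 1
      = α * m + (α - β) * j + (α + 1) := by ring
  have htpow (m : ℕ) : t ^ (α * ((m : ℝ) + 1)) = t ^ α * (t ^ α) ^ m := by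
    rw [Real.rpow_mul ht, ← Nat.cast_succ, Real.rpow_natCast, _root_.pow_succ']
  simp only [hGamma, factorial_add_div_factorial, htpow]
  generalize -b₁ * ((t ^ (α - β) : ℝ) : 𝕜) = x
  have hdouble := summable_choose_mul_pow_mul_pow_div_Gamma (𝕜 := 𝕜) hα (sub_pos.2 hβα) (α + 1)
  constructor
  · intro m
    -- The factor `y ^ m` of the double series may vanish, so the row is read off at `y = 1`.
    refine (((hdouble 1 x).prod_factor m).mul_left (m ! : 𝕜)).congr fun j ↦ ?_
    simp only [one_pow]
    ring
  · refine ((hdouble (-b₀ * (t ^ α : ℝ)) x).prod.mul_left ((t ^ α : ℝ) : 𝕜)).congr fun m ↦ ?_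
    rw [← tsum_mul_left, ← tsum_mul_left]
    refine tsum_congr fun j ↦ ?_
    have hm : (m ! : 𝕜) ≠ 0 := mod_cast m.factorial_ne_zero
    push_cast
    rw [neg_mul, neg_pow, mul_pow]
    field_simp

end BivariateSeries

/-- Summability of the double series giving the analytical unit step response
of the fractional-order system `a₂ y^{(α)} + a₁ y^{(β)} + a₀ y = u`:
for `x = −(a₁/a₂)·t^{α−β}`, each inner Mittag-Leffler-derivative series
`S_m = ∑_j ((j+m)!/j!)·x^j/Γ((α−β)(j+m)+α+βm+1)` is summable, and the outer
series `∑_m ((−1)^m/m!)·(a₀/a₂)^m·t^{α(m+1)}·S_m` is summable as well. -/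
theorem step_response_series_summable (a₂ a₁ a₀ α β : ℝ)
    (ha₂ : 0 < a₂) (ha₁ : 0 < a₁) (ha₀ : 0 < a₀)
    (hβ : 0 < β) (hαβ : β < α) (t : ℝ) (ht : 0 ≤ t) :
    (∀ m : ℕ, Summable (fun j : ℕ =>
        (((j + m)! : ℝ) / (j ! : ℝ)) * (-(a₁ / a₂) * t ^ (α - β)) ^ j /
          Real.Gamma ((α - β) * ((j : ℝ) + (m : ℝ)) + α + β * (m : ℝ) + 1))) ∧
    Summable (fun m : ℕ =>
      ((-1 : ℝ) ^ m / (m ! : ℝ)) * (a₀ / a₂) ^ m * t ^ (α * ((m : ℝ) + 1)) *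
        ∑' j : ℕ, (((j + m)! : ℝ) / (j ! : ℝ)) * (-(a₁ / a₂) * t ^ (α - β)) ^ j /
          Real.Gamma ((α - β) * ((j : ℝ) + (m : ℝ)) + α + β * (m : ℝ) + 1)) := by
  simpa only [RCLike.ofReal_real_eq_id, id] using
    step_response_series_summable_general (hβ.trans hαβ) hαβ ht (a₁ / a₂) (a₀ / a₂)
end
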